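/- Let U be an open subset of ℝ^{2n} with n ≥ 2, let ω be a smooth differential 2-form on U that is nondegenerate at every point, and let α and β be smooth 1-forms on U satisfying dω = α ∧ ω and dω = β ∧ ω. Then α = β. -/

import Mathlib

open scoped Topology

/-- The exterior derivative of a 2-form `ω` (given as a smooth family of continuous bilinear
forms) evaluated at `x` on the triple of vectors `(u, v, w)`:
`(dω)ₓ(u,v,w) = (D_u ω)(v,w) - (D_v ω)(u,w) + (D_w ω)(u,v)`. -/
noncomputable def extDeriv2 {m : ℕ}
    (ω : (Fin m → ℝ) → ((Fin m → ℝ) →L[ℝ] (Fin m → ℝ) →L[ℝ] ℝ))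
    (x u v w : Fin m → ℝ) : ℝ :=
  fderiv ℝ ω x u v w - fderiv ℝ ω x v u w + fderiv ℝ ω x w u v

/-- The wedge of a 1-form value `α` with a 2-form value `ω` evaluated on `(u,v,w)`:
`(α ∧ ω)(u,v,w) = α(u) ω(v,w) - α(v) ω(u,w) + α(w) ω(u,v)`. -/
noncomputable def wedge12 {m : ℕ} (α : (Fin m → ℝ) →L[ℝ] ℝ)
    (ω : (Fin m → ℝ) →L[ℝ] (Fin m → ℝ) →L[ℝ] ℝ)
    (u v w : Fin m → ℝ) : ℝ :=
  α u * ω v w - α v * ω u w + α w * ω u v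

/-- In dimension at least 3, wedging with a nondegenerate 2-form is injective on 1-forms. -/
theorem wedge12_left_injective {m : ℕ} (hm : 2 < m)
    {ω : (Fin m → ℝ) →L[ℝ] (Fin m → ℝ) →L[ℝ] ℝ} (hω : ∀ v, (∀ w, ω v w = 0) → v = 0)
    {α β : (Fin m → ℝ) →L[ℝ] ℝ} (h : ∀ u v w, wedge12 α ω u v w = wedge12 β ω u v w) :
    α = β := by
  ext1 u
  by_contra hu
  obtain ⟨v, hv, hv0⟩ := Submodule.exists_mem_ne_zero_of_ne_bot
    (LinearMap.ker_ne_bot_of_finrank_lt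
      (f := ((α - β).prod (ω u) : (Fin m → ℝ) →ₗ[ℝ] ℝ × ℝ)) (by simpa using hm))
  obtain ⟨hαβ, huv⟩ : α v - β v = 0 ∧ ω u v = 0 := by simpa using hv
  refine hv0 (hω v fun w ↦ ?_)
  have huvw := h u v w
  simp only [wedge12, huv] at huvw
  have hmul : (α u - β u) * ω v w = 0 := by linear_combination huvw + ω u w * hαβ
  exact (mul_eq_zero.mp hmul).resolve_left (sub_ne_zero.mpr hu)

/-- Uniqueness of the Lee form in dimension `2n ≥ 4`: if `ω` is a smooth
nondegenerate (alternating) 2-form on an open set `U ⊆ ℝ^{2n}` and the smooth 1-forms `α`, `β`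
both satisfy `dω = α ∧ ω` on `U`, then `α = β` on `U`. -/
theorem lee_form_unique
    {n : ℕ} (hn : 2 ≤ n)
    (U : Set (Fin (2 * n) → ℝ)) (hU : IsOpen U)
    (ω : (Fin (2 * n) → ℝ) → ((Fin (2 * n) → ℝ) →L[ℝ] (Fin (2 * n) → ℝ) →L[ℝ] ℝ))
    (hω : ContDiffOn ℝ (⊤ : ℕ∞) ω U)
    (halt : ∀ x ∈ U, ∀ v, ω x v v = 0)
    (hnondeg : ∀ x ∈ U, ∀ v, (∀ w, ω x v w = 0) → v = 0)
    (α β : (Fin (2 * n) → ℝ) → ((Fin (2 * n) → ℝ) →L[ℝ] ℝ))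
    (hα : ContDiffOn ℝ (⊤ : ℕ∞) α U) (hβ : ContDiffOn ℝ (⊤ : ℕ∞) β U)
    (hdα : ∀ x ∈ U, ∀ u v w, extDeriv2 ω x u v w = wedge12 (α x) (ω x) u v w)
    (hdβ : ∀ x ∈ U, ∀ u v w, extDeriv2 ω x u v w = wedge12 (β x) (ω x) u v w) :
    Set.EqOn α β U := by
  intro x hx
  exact wedge12_left_injective (by omega) (hnondeg x hx) fun u v w ↦
    (hdα x hx u v w).symm.trans (hdβ x hx u v w)
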